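/- Let a, b, x_1, x_2, y be distinct, let f be a polymatroid on {a,b}, and let f_X on {a,b,x_1,x_2} and f_y on {a,b,y} be polymatroids extending f. Then f_X and f_y have an amalgam if and only if the following inequality holds for each choice in the braced alternative and for all inequalities obtained from it by exchanging a with b and by exchanging x_1 with x_2: {f_X[a,b,x_1,x_2] or f_X[a,x_1,b,x_2]} + f_y(y,a|b) + f_y(y,b|a) + f_y(a,b|y) + 3·f_y(y|ab) ≥ 0. -/

import Mathlib

open Finset

noncomputable section

variable {α : Type*} [DecidableEq α]

/-- `f` is a polymatroid with ground set `M`: it vanishes on `∅` and is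
non-negative, monotone and submodular on subsets of `M`. -/
def IsPolymatroid (M : Finset α) (f : Finset α → ℝ) : Prop :=
  f ∅ = 0 ∧
  (∀ A, A ⊆ M → 0 ≤ f A) ∧
  (∀ A B, A ⊆ B → B ⊆ M → f A ≤ f B) ∧
  (∀ A B, A ⊆ M → B ⊆ M → f (A ∪ B) + f (A ∩ B) ≤ f A + f B)

/-- `pmi f I J K` is the expression `f(I,J|K) = f(I∪K)+f(J∪K)−f(I∪J∪K)−f(K)`. -/
def pmi (f : Finset α → ℝ) (I J K : Finset α) : ℝ :=
  f (I ∪ K) + f (J ∪ K) - f (I ∪ J ∪ K) - f K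

/-- `pcd f I K` is the expression `f(I|K) = f(I∪K) − f(K)`. -/
def pcd (f : Finset α → ℝ) (I K : Finset α) : ℝ := f (I ∪ K) - f K

/-- Polymatroids `fX` on `M ∪ X` and `fY` on `M ∪ Y` have an amalgam: a common
polymatroid extension on `M ∪ X ∪ Y`. -/
def HaveAmalgam (M X Y : Finset α) (fX fY : Finset α → ℝ) : Prop :=
  ∃ g : Finset α → ℝ, IsPolymatroid (M ∪ X ∪ Y) g ∧
    (∀ A, A ⊆ M ∪ X → g A = fX A) ∧ (∀ A, A ⊆ M ∪ Y → g A = fY A)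

/-- Polymatroids `fX` on `M ∪ X` and `fY` on `M ∪ Y` are adhesive: they have a
modular common extension, i.e. one with `g(X,Y|M) = 0`. -/
def Adhesive (M X Y : Finset α) (fX fY : Finset α → ℝ) : Prop :=
  ∃ g : Finset α → ℝ, IsPolymatroid (M ∪ X ∪ Y) g ∧
    (∀ A, A ⊆ M ∪ X → g A = fX A) ∧ (∀ A, A ⊆ M ∪ Y → g A = fY A) ∧
    pmi g X Y M = 0

/-- The Ingleton expression `f[I,J,K,L] = −f(I,J)+f(I,J|K)+f(I,J|L)+f(K,L)`. -/
def ingleton (f : Finset α → ℝ) (I J K L : Finset α) : ℝ :=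
  -pmi f I J ∅ + pmi f I J K + pmi f I J L + pmi f K L ∅

/-! ### Functions on four bits -/

/-- Elementary submodularity of a function of four bits. -/
def Sub4 (F : Bool → Bool → Bool → Bool → ℝ) : Prop :=
  (∀ r s, F true true r s + F false false r s ≤ F true false r s + F false true r s) ∧
  (∀ q s, F true q true s + F false q false s ≤ F true q false s + F false q true s) ∧
  (∀ q r, F true q r true + F false q r false ≤ F true q r false + F false q r true) ∧
  (∀ p s, F p true true s + F p false false s ≤ F p true false s + F p false true s) ∧
  (∀ p r, F p true r true + F p false r false ≤ F p true r false + F p false r true) ∧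
  (∀ p q, F p q true true + F p q false false ≤ F p q true false + F p q false true)

/-- Monotonicity at the top of the Boolean lattice. -/
def Top4 (F : Bool → Bool → Bool → Bool → ℝ) : Prop :=
  F false true true true ≤ F true true true true ∧
  F true false true true ≤ F true true true true ∧
  F true true false true ≤ F true true true true ∧
  F true true true false ≤ F true true true true

/-- A function of four bits which decreases in each bit. -/
def Anti4 (D : Bool → Bool → Bool → Bool → ℝ) : Prop :=
  (∀ q r s, D true q r s ≤ D false q r s) ∧
  (∀ p r s, D p true r s ≤ D p false r s) ∧
  (∀ p q s, D p q true s ≤ D p q false s) ∧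
  (∀ p q r, D p q r true ≤ D p q r false)

theorem Anti4.le {D : Bool → Bool → Bool → Bool → ℝ} (h : Anti4 D)
    {p q r s p' q' r' s' : Bool} (hp : p ≤ p') (hq : q ≤ q') (hr : r ≤ r') (hs : s ≤ s') :
    D p' q' r' s' ≤ D p q r s := by
  obtain ⟨h1, h2, h3, h4⟩ := h
  have e1 : D p' q' r' s' ≤ D p q' r' s' := by
    revert hp; cases p <;> cases p' <;> simp [h1]
  have e2 : D p q' r' s' ≤ D p q r' s' := by
    revert hq; cases q <;> cases q' <;> simp [h2]
  have e3 : D p q r' s' ≤ D p q r s' := by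
    revert hr; cases r <;> cases r' <;> simp [h3]
  have e4 : D p q r s' ≤ D p q r s := by
    revert hs; cases s <;> cases s' <;> simp [h4]
  exact e1.trans (e2.trans (e3.trans e4))

theorem mono4 {F : Bool → Bool → Bool → Bool → ℝ} (h : Sub4 F) (ht : Top4 F) :
    Anti4 (fun p q r s => - F p q r s) := by
  obtain ⟨h1, h2, h3, h4, h5, h6⟩ := h
  obtain ⟨t1, t2, t3, t4⟩ := ht
  simp only [Bool.forall_bool] at h1 h2 h3 h4 h5 h6
  refine ⟨?_, ?_, ?_, ?_⟩ <;> simp only [Bool.forall_bool] <;>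
    refine ⟨⟨⟨?_, ?_⟩, ?_, ?_⟩, ⟨?_, ?_⟩, ?_, ?_⟩ <;> linarith

theorem sub4_full {F : Bool → Bool → Bool → Bool → ℝ} (h : Sub4 F)
    (p q r s p' q' r' s' : Bool) :
    F (p || p') (q || q') (r || r') (s || s') + F (p && p') (q && q') (r && r') (s && s') ≤
      F p q r s + F p' q' r' s' := by
  obtain ⟨h1, h2, h3, h4, h5, h6⟩ := h
  simp only [Bool.forall_bool] at h1 h2 h3 h4 h5 h6
  cases p <;> cases p' <;> cases q <;> cases q' <;> cases r <;> cases r' <;>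
    cases s <;> cases s' <;> simp only [Bool.or_true, Bool.or_false, Bool.true_or,
      Bool.and_true, Bool.and_false, Bool.or_self, Bool.and_self] <;> linarith

/-! ### Sets described by bits -/

/-- The subset of `{a, b, c, d, y}` described by five bits. -/
def bits (a b c d y : α) (p q r s e : Bool) : Finset α :=
  (if p then {a} else ∅) ∪ (if q then {b} else ∅) ∪ (if r then {c} else ∅) ∪
    (if s then {d} else ∅) ∪ (if e then {y} else ∅)

theorem mem_bits (a b c d y : α) (p q r s e : Bool) (z : α) :
    z ∈ bits a b c d y p q r s e ↔ (z = a ∧ p = true) ∨ (z = b ∧ q = true) ∨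
      (z = c ∧ r = true) ∨ (z = d ∧ s = true) ∨ (z = y ∧ e = true) := by
  unfold bits
  cases p <;> cases q <;> cases r <;> cases s <;> cases e <;> simp

theorem bits_union (a b c d y : α) (p q r s e p' q' r' s' e' : Bool) :
    bits a b c d y p q r s e ∪ bits a b c d y p' q' r' s' e' =
      bits a b c d y (p || p') (q || q') (r || r') (s || s') (e || e') := by
  ext z
  simp only [Finset.mem_union, mem_bits, Bool.or_eq_true]
  grind

theorem bits_inter {a b c d y : α} (hnd : ([a, b, c, d, y] : List α).Nodup)
    (p q r s e p' q' r' s' e' : Bool) :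
    bits a b c d y p q r s e ∩ bits a b c d y p' q' r' s' e' =
      bits a b c d y (p && p') (q && q') (r && r') (s && s') (e && e') := by
  ext z
  simp only [Finset.mem_inter, mem_bits, Bool.and_eq_true]
  simp only [List.nodup_cons, List.mem_cons, List.not_mem_nil, not_or, or_false] at hnd
  obtain ⟨⟨h1, h2, h3, h4⟩, ⟨h5, h6, h7⟩, ⟨h8, h9⟩, h10, -⟩ := hnd
  grind

theorem bits_eq {a b c d y : α} {A : Finset α}
    (hA : A ⊆ ({a, b} ∪ {c, d} ∪ {y} : Finset α)) :
    bits a b c d y (decide (a ∈ A)) (decide (b ∈ A)) (decide (c ∈ A)) (decide (d ∈ A))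
      (decide (y ∈ A)) = A := by
  ext z
  simp only [mem_bits, decide_eq_true_eq]
  constructor
  · rintro (⟨rfl, h⟩ | ⟨rfl, h⟩ | ⟨rfl, h⟩ | ⟨rfl, h⟩ | ⟨rfl, h⟩) <;> exact h
  · intro h
    have := hA h
    simp only [Finset.mem_union, Finset.mem_insert, Finset.mem_singleton] at this
    rcases this with ((rfl | rfl) | (rfl | rfl)) | rfl <;> simp [h]

/-- All the basic facts about restricting a polymatroid to bits. -/
theorem poly_bits {a b c d y : α} (hnd : ([a, b, c, d, y] : List α).Nodup)
    {M : Finset α} {g : Finset α → ℝ} (hg : IsPolymatroid M g) :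
    (∀ p q r s e p' q' r' s' e', bits a b c d y p q r s e ⊆ M →
      bits a b c d y p' q' r' s' e' ⊆ M →
      g (bits a b c d y (p || p') (q || q') (r || r') (s || s') (e || e')) +
      g (bits a b c d y (p && p') (q && q') (r && r') (s && s') (e && e')) ≤
      g (bits a b c d y p q r s e) + g (bits a b c d y p' q' r' s' e')) := by
  intro p q r s e p' q' r' s' e' h h'
  have := hg.2.2.2 _ _ h h'
  rwa [bits_union, bits_inter hnd] at this

theorem bits_sub_all (a b c d y : α) (p q r s e : Bool) :
    bits a b c d y p q r s e ⊆ ({a, b} ∪ {c, d} ∪ {y} : Finset α) := by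
  intro z
  simp only [mem_bits, Finset.mem_union, Finset.mem_insert, Finset.mem_singleton]
  tauto

theorem bits_sub_X (a b c d y : α) (p q r s : Bool) :
    bits a b c d y p q r s false ⊆ ({a, b} ∪ {c, d} : Finset α) := by
  intro z
  simp only [mem_bits, Finset.mem_union, Finset.mem_insert, Finset.mem_singleton]
  simp
  tauto

theorem bits_sub_Y (a b c d y : α) (p q e : Bool) :
    bits a b c d y p q false false e ⊆ ({a, b} ∪ {y} : Finset α) := by
  intro z
  simp only [mem_bits, Finset.mem_union, Finset.mem_insert, Finset.mem_singleton]
  simp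
  tauto
/-- One step of variable elimination: a real number between finitely many bounds. -/
theorem pick (l : ℝ) (L U : List ℝ) (h : ∀ u ∈ U, ∀ x ∈ l :: L, x ≤ u) :
    ∃ x, (∀ z ∈ l :: L, z ≤ x) ∧ ∀ u ∈ U, x ≤ u := by
  induction L generalizing l with
  | nil => exact ⟨l, by simp, fun u hu => h u hu l (by simp)⟩
  | cons m L ih =>
    obtain ⟨x, hx, hx'⟩ := ih (max l m) (by
      intro u hu z hz
      rcases List.mem_cons.1 hz with rfl | hz
      · exact max_le (h u hu l (by simp)) (h u hu m (by simp))
      · exact h u hu z (by simp [hz]))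
    refine ⟨x, ?_, hx'⟩
    have h0 := hx (max l m) (by simp)
    intro z hz
    rcases List.mem_cons.1 hz with rfl | hz
    · exact (le_max_left _ _).trans h0
    · rcases List.mem_cons.1 hz with rfl | hz
      · exact (le_max_right _ _).trans h0
      · exact hx z (by simp [hz])

set_option maxHeartbeats 40000000 in
theorem core_real (fa fb f1 f2 fab fa1 fa2 fb1 fb2 f12 fab1 fab2 fa12 fb12 fab12 p qa qb k : ℝ)
    (c1 : fb12 ≤ fab12)
    (c2 : fa12 ≤ fab12)
    (c3 : fab2 ≤ fab12)
    (c4 : fab1 ≤ fab12)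
    (c5 : fab ≤ fa + fb)
    (c6 : f1 + fab1 ≤ fa1 + fb1)
    (c7 : f2 + fab2 ≤ fa2 + fb2)
    (c8 : f12 + fab12 ≤ fa12 + fb12)
    (c9 : fa1 ≤ f1 + fa)
    (c10 : fb + fab1 ≤ fab + fb1)
    (c11 : f2 + fa12 ≤ f12 + fa2)
    (c12 : fb2 + fab12 ≤ fab2 + fb12)
    (c13 : fa2 ≤ f2 + fa)
    (c14 : fb + fab2 ≤ fab + fb2)
    (c15 : f1 + fa12 ≤ f12 + fa1)
    (c16 : fb1 + fab12 ≤ fab1 + fb12)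
    (c17 : fb1 ≤ f1 + fb)
    (c18 : fa + fab1 ≤ fa1 + fab)
    (c19 : f2 + fb12 ≤ f12 + fb2)
    (c20 : fa2 + fab12 ≤ fa12 + fab2)
    (c21 : fb2 ≤ f2 + fb)
    (c22 : fa + fab2 ≤ fa2 + fab)
    (c23 : f1 + fb12 ≤ f12 + fb1)
    (c24 : fa1 + fab12 ≤ fa12 + fab1)
    (c25 : f12 ≤ f1 + f2)
    (c26 : fa + fa12 ≤ fa1 + fa2)
    (c27 : fb + fb12 ≤ fb1 + fb2)
    (c28 : fab + fab12 ≤ fab1 + fab2)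
    (c29 : 0 ≤ k)
    (c30 : qa ≤ p)
    (c31 : qb ≤ p)
    (c32 : k ≤ qa)
    (c33 : k ≤ qb)
    (c34 : p + k + fab ≤ qa + qb + fa + fb)
    (c35 : qb + fb ≤ k + fab)
    (c36 : qa + fa ≤ k + fab)
    (c37 : p + f12 + fab1 + fab2 ≤ 2 * qa + 2 * qb + fa1 + fa2 + fb1 + fb2)
    (c38 : p + f1 + fb2 + fa12 + fab1 ≤ 2 * qa + 2 * qb + fb + f12 + fa1 + fa2 + fb1)
    (c39 : p + f1 + fa2 + fab1 + fb12 ≤ 2 * qa + 2 * qb + fa + f12 + fa1 + fb1 + fb2)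
    (c40 : p + f2 + fb1 + fa12 + fab2 ≤ 2 * qa + 2 * qb + fb + f12 + fa1 + fa2 + fb2)
    (c41 : p + f2 + fa1 + fab2 + fb12 ≤ 2 * qa + 2 * qb + fa + f12 + fa2 + fb1 + fb2)
    : ∃ t w12 w1 v2 v12 u12 v1 u1 u2 w2 : ℝ,
      w12 + fb12 ≤ t + fab12 ∧
      v1 ≤ u1 ∧
      v2 ≤ u2 ∧
      t ≤ w1 ∧
      t ≤ w2 ∧
      v12 ≤ u12 ∧
      t ≤ w12 ∧
      v12 + fa12 ≤ t + fab12 ∧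
      w1 ≤ u1 ∧
      w2 ≤ u2 ∧
      t ≤ v1 ∧
      t ≤ v2 ∧
      w12 ≤ u12 ∧
      t ≤ v12 ∧
      u1 ≤ p ∧
      v1 ≤ qa ∧
      w1 ≤ qb ∧
      u12 ≤ u2 ∧
      t ≤ k ∧
      v12 ≤ v2 ∧
      w12 ≤ w2 ∧
      u2 ≤ p ∧
      v2 ≤ qa ∧
      w2 ≤ qb ∧
      u12 ≤ u1 ∧
      v12 ≤ v1 ∧
      w12 ≤ w1 ∧
      0 ≤ t ∧
      u1 + t + f1 + fab1 ≤ v1 + w1 + fa1 + fb1 ∧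
      u2 + t + f2 + fab2 ≤ v2 + w2 + fa2 + fb2 ∧
      u12 + t + f12 + fab12 ≤ v12 + w12 + fa12 + fb12 ∧
      p + v1 + fa1 ≤ u1 + qa + f1 + fa ∧
      qb + t + fb + fab1 ≤ k + w1 + fab + fb1 ∧
      u2 + v12 + f2 + fa12 ≤ u12 + v2 + f12 + fa2 ∧
      w2 + fb2 + fab12 ≤ w12 + fab2 + fb12 ∧
      p + v2 + fa2 ≤ u2 + qa + f2 + fa ∧
      qb + t + fb + fab2 ≤ k + w2 + fab + fb2 ∧
      u1 + v12 + f1 + fa12 ≤ u12 + v1 + f12 + fa1 ∧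
      w1 + fb1 + fab12 ≤ w12 + fab1 + fb12 ∧
      p + w1 + fb1 ≤ u1 + qb + f1 + fb ∧
      qa + t + fa + fab1 ≤ v1 + k + fa1 + fab ∧
      u2 + w12 + f2 + fb12 ≤ u12 + w2 + f12 + fb2 ∧
      v2 + fa2 + fab12 ≤ v12 + fa12 + fab2 ∧
      p + w2 + fb2 ≤ u2 + qb + f2 + fb ∧
      qa + t + fa + fab2 ≤ v2 + k + fa2 + fab ∧
      u1 + w12 + f1 + fb12 ≤ u12 + w1 + f12 + fb1 ∧
      v1 + fa1 + fab12 ≤ v12 + fa12 + fab1 ∧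
      p + u12 + f12 ≤ u1 + u2 + f1 + f2 ∧
      qa + v12 + fa + fa12 ≤ v1 + v2 + fa1 + fa2 ∧
      qb + w12 + fb + fb12 ≤ w1 + w2 + fb1 + fb2 ∧
      k + fab + fab12 ≤ t + fab1 + fab2 := by
  obtain ⟨t, tl, tu⟩ := pick (0)
      [k + fab + fab12 - fab1 - fab2]
      [k, (2 * qa + 2 * qb + fa1 + fa2 + fb1 + fb2 - p - f12 - fab1 - fab2) / 3,
      (2 * qa + 2 * qb + fb + f12 + fa1 + fa2 + fb2 - p - f2 - fb1 - fa12 - fab2) / 3,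
      (2 * qa + 2 * qb + fa + f12 + fa1 + fb1 + fb2 - p - f1 - fa2 - fab1 - fb12) / 3,
      (2 * qa + 2 * qb + fb + f12 + fa1 + fa2 + fb1 - p - f1 - fb2 - fa12 - fab1) / 3,
      (2 * qa + 2 * qb + fa + f12 + fa2 + fb1 + fb2 - p - f2 - fa1 - fab2 - fb12) / 3] (by
        simp only [List.forall_mem_cons, List.not_mem_nil, false_imp_iff, implies_true, and_true]
        repeat' apply And.intro
        all_goals linarith)
  simp only [List.forall_mem_cons, List.not_mem_nil, false_imp_iff, implies_true, and_true] at tl tu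
  obtain ⟨tl1, tl2⟩ := tl
  obtain ⟨tu1, tu2, tu3, tu4, tu5, tu6⟩ := tu
  obtain ⟨w12, w12l, w12u⟩ := pick (t)
      [qb + t + fb + fab12 - k - fab - fb12]
      [t + fab12 - fb12, qb,
      2 * qa + 2 * qb + fa1 + fa2 + fb1 + fb2 - p - 2 * t - f12 - fab1 - fab2,
      2 * qa + 2 * qb + fb + f12 + fa1 + fa2 + fb2 - p - 2 * t - f2 - fb1 - fa12 - fab2,
      2 * qa + 2 * qb + fa + f12 + fa1 + fb1 + fb2 - p - 2 * t - f1 - fa2 - fab1 - fb12,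
      2 * qa + 2 * qb + fb + f12 + fa1 + fa2 + fb1 - p - 2 * t - f1 - fb2 - fa12 - fab1,
      2 * qa + 2 * qb + fa + f12 + fa2 + fb1 + fb2 - p - 2 * t - f2 - fa1 - fab2 - fb12] (by
        simp only [List.forall_mem_cons, List.not_mem_nil, false_imp_iff, implies_true, and_true]
        repeat' apply And.intro
        all_goals linarith)
  simp only [List.forall_mem_cons, List.not_mem_nil, false_imp_iff, implies_true, and_true] at w12l w12u
  obtain ⟨w12l1, w12l2⟩ := w12l
  obtain ⟨w12u1, w12u2, w12u3, w12u4, w12u5, w12u6, w12u7⟩ := w12u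
  obtain ⟨w1, w1l, w1u⟩ := pick (w12)
      [qb + t + fb + fab1 - k - fab - fb1,
      2 * t + p + w12 + f12 + fab1 + fab2 - qb - 2 * qa - fa1 - fa2 - fb1 - fb2,
      2 * t + p + w12 + f1 + fa2 + fab1 + fb12 - qb - 2 * qa - fa - f12 - fa1 - fb1 - fb2,
      2 * t + p + w12 + f1 + fb2 + fa12 + fab1 - qb - 2 * qa - fb - f12 - fa1 - fa2 - fb1,
      2 * t + p + w12 + f2 + fa1 + fab2 + fb12 - qb - 2 * qa - fa - f12 - fa2 - fb1 - fb2,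
      (2 * t + qb + w12 + f1 + f2 + fb + fa12 + fab1 + fb12 - 2 * qa - f12 - fa1 - fa2 - fb2 - 2 * fb1) / 2]
      [qb, w12 + fab1 + fb12 - fb1 - fab12,
      2 * qa + 2 * qb + fb + f12 + fa1 + fa2 + fb2 - p - 2 * t - f2 - fb1 - fa12 - fab2] (by
        simp only [List.forall_mem_cons, List.not_mem_nil, false_imp_iff, implies_true, and_true]
        repeat' apply And.intro
        all_goals linarith)
  simp only [List.forall_mem_cons, List.not_mem_nil, false_imp_iff, implies_true, and_true] at w1l w1u
  obtain ⟨w1l1, w1l2, w1l3, w1l4, w1l5, w1l6, w1l7⟩ := w1l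
  obtain ⟨w1u1, w1u2, w1u3⟩ := w1u
  obtain ⟨v2, v2l, v2u⟩ := pick (qa + t + fa + fab2 - k - fa2 - fab)
      [2 * t + p + w12 + f12 + fab1 + fab2 - qa - qb - w1 - fa1 - fa2 - fb1 - fb2, t,
      2 * t + p + w12 + f1 + fb2 + fa12 + fab1 - qa - qb - w1 - fb - f12 - fa1 - fa2 - fb1,
      2 * t + p + w12 + f2 + fa1 + fab2 + fb12 - qa - qb - w1 - fa - f12 - fa2 - fb1 - fb2,
      2 * t + p + w1 + f2 + fb1 + fa12 + fab2 - qa - 2 * qb - fb - f12 - fa1 - fa2 - fb2,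
      2 * t + qb + w12 + f1 + f2 + fb + fa12 + fab1 + fb12 - qa - 2 * w1 - f12 - fa1 - fa2 - fb2 - 2 * fb1,
      (2 * t + qa + w12 + f1 + f2 + fa + fa12 + fab2 + fb12 - qb - w1 - f12 - fa1 - fb1 - fb2 - 2 * fa2) / 2]
      [qa, 2 * qa + qb + w1 + fa + f12 + fa1 + fb1 + fb2 - p - w12 - t - f1 - fa2 - fab1 - fb12,
      t + fab2 - fa2] (by
        simp only [List.forall_mem_cons, List.not_mem_nil, false_imp_iff, implies_true, and_true]
        repeat' apply And.intro
        all_goals linarith)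
  simp only [List.forall_mem_cons, List.not_mem_nil, false_imp_iff, implies_true, and_true] at v2l v2u
  obtain ⟨v2l1, v2l2, v2l3, v2l4, v2l5, v2l6, v2l7, v2l8⟩ := v2l
  obtain ⟨v2u1, v2u2, v2u3⟩ := v2u
  obtain ⟨v12, v12l, v12u⟩ := pick (t)
      [v2 + fa2 + fab12 - fa12 - fab2]
      [t + fab12 - fa12, v2,
      qa + qb + v2 + w1 + fa1 + fa2 + fb1 + fb2 - p - 2 * t - f12 - fab1 - fab2,
      qa + qb + v2 + w1 + fb + f12 + fa1 + fa2 + fb1 - p - w12 - t - f1 - fb2 - fa12 - fab1,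
      qa + qb + v2 + w1 + fa + f12 + fa2 + fb1 + fb2 - p - w12 - t - f2 - fa1 - fab2 - fb12,
      2 * qb + qa + v2 + fb + f12 + fa1 + fa2 + fb2 - p - w1 - t - f2 - fb1 - fa12 - fab2,
      2 * w1 + qa + v2 + 2 * fb1 + f12 + fa1 + fa2 + fb2 - qb - w12 - t - f1 - f2 - fb - fa12 - fab1 - fb12,
      2 * v2 + qb + w1 + 2 * fa2 + f12 + fa1 + fb1 + fb2 - qa - w12 - t - f1 - f2 - fa - fa12 - fab2 - fb12] (by
        simp only [List.forall_mem_cons, List.not_mem_nil, false_imp_iff, implies_true, and_true]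
        repeat' apply And.intro
        all_goals linarith)
  simp only [List.forall_mem_cons, List.not_mem_nil, false_imp_iff, implies_true, and_true] at v12l v12u
  obtain ⟨v12l1, v12l2⟩ := v12l
  obtain ⟨v12u1, v12u2, v12u3, v12u4, v12u5, v12u6, v12u7, v12u8⟩ := v12u
  obtain ⟨u12, u12l, u12u⟩ := pick (v12)
      [w12, v2 + w12 + f2 + fb12 - qb - f12 - fb2,
      p + v2 + w12 + fa2 + fb12 - qa - qb - fa - f12 - fb2,
      p + v12 + w12 + fb2 + fa12 - qb - v2 - fb - f12 - fa2,
      qb + v12 + t + f2 + fb + fa12 + fab2 - v2 - k - f12 - fa2 - fab - fb2,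
      qb + v12 + w12 + f2 + fb + fa12 + fb12 - v2 - w1 - f12 - fa2 - fb1 - fb2,
      p + v12 + fa12 - qa - fa - f12, p + w12 + fb12 - qb - fb - f12,
      w1 + v12 + f1 + fa12 - qa - f12 - fa1,
      p + v12 + w12 + fa1 + fb12 - qa - w1 - fa - f12 - fb1,
      p + v12 + w12 + fa12 + fb12 - v2 - w1 - f12 - fa2 - fb1,
      p + w1 + v12 + fb1 + fa12 - qa - qb - fb - f12 - fa1,
      qa + w12 + t + f1 + fa + fab1 + fb12 - k - w1 - f12 - fa1 - fab - fb1,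
      qa + v12 + w12 + f1 + fa + fa12 + fb12 - v2 - w1 - f12 - fa1 - fa2 - fb1]
      [v12 + w12 + fa12 + fb12 - t - f12 - fab12, qb + v2 + fa2 + fb2 - t - f2 - fab2, p,
      qa + w1 + fa1 + fb1 - t - f1 - fab1,
      qa + qb + v2 + w1 + fa1 + fa2 + fb1 + fb2 - p - 2 * t - f12 - fab1 - fab2] (by
        simp only [List.forall_mem_cons, List.not_mem_nil, false_imp_iff, implies_true, and_true]
        repeat' apply And.intro
        all_goals linarith)
  simp only [List.forall_mem_cons, List.not_mem_nil, false_imp_iff, implies_true, and_true] at u12l u12u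
  obtain ⟨u12l1, u12l2, u12l3, u12l4, u12l5, u12l6, u12l7, u12l8, u12l9, u12l10, u12l11, u12l12, u12l13, u12l14, u12l15⟩ := u12l
  obtain ⟨u12u1, u12u2, u12u3, u12u4, u12u5⟩ := u12u
  obtain ⟨v1, v1l, v1u⟩ := pick (v12)
      [qa + t + fa + fab1 - k - fa1 - fab, qa + v12 + fa + fa12 - v2 - fa1 - fa2,
      w1 + v12 + f1 + fa12 - u12 - f12 - fa1, u12 + t + f1 + fab1 - w1 - fa1 - fb1,
      p + w1 + v12 + fb1 + fa12 - qb - u12 - fb - f12 - fa1,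
      2 * t + p + u12 + f12 + fab1 + fab2 - qb - v2 - w1 - fa1 - fa2 - fb1 - fb2]
      [qa, v12 + fa12 + fab1 - fa1 - fab12, u12 + w1 + f12 + fb1 - w12 - f1 - fb12,
      qa + u12 + w1 + fa + f12 + fb1 - p - w12 - fa1 - fb12] (by
        simp only [List.forall_mem_cons, List.not_mem_nil, false_imp_iff, implies_true, and_true]
        repeat' apply And.intro
        all_goals linarith)
  simp only [List.forall_mem_cons, List.not_mem_nil, false_imp_iff, implies_true, and_true] at v1l v1u
  obtain ⟨v1l1, v1l2, v1l3, v1l4, v1l5, v1l6, v1l7⟩ := v1l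
  obtain ⟨v1u1, v1u2, v1u3, v1u4⟩ := v1u
  obtain ⟨u1, u1l, u1u⟩ := pick (v1)
      [w1, u12, p + v1 + fa1 - qa - f1 - fa, p + w1 + fb1 - qb - f1 - fb,
      p + u12 + t + f12 + fab2 - qb - v2 - f1 - fa2 - fb2]
      [p, v1 + w1 + fa1 + fb1 - t - f1 - fab1, u12 + v1 + f12 + fa1 - v12 - f1 - fa12,
      u12 + w1 + f12 + fb1 - w12 - f1 - fb12] (by
        simp only [List.forall_mem_cons, List.not_mem_nil, false_imp_iff, implies_true, and_true]
        repeat' apply And.intro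
        all_goals linarith)
  simp only [List.forall_mem_cons, List.not_mem_nil, false_imp_iff, implies_true, and_true] at u1l u1u
  obtain ⟨u1l1, u1l2, u1l3, u1l4, u1l5, u1l6⟩ := u1l
  obtain ⟨u1u1, u1u2, u1u3, u1u4⟩ := u1u
  obtain ⟨u2, u2l, u2u⟩ := pick (v2)
      [u12, p + v2 + fa2 - qa - f2 - fa, p + u12 + f12 - u1 - f1 - f2,
      p + w12 + fb2 - qb - f2 - fb, qb + t + fb + fab2 - k - fab - fb2,
      qb + w12 + fb + fb12 - w1 - fb1 - fb2]
      [p, u12 + v2 + f12 + fa2 - v12 - f2 - fa12, qb + v2 + fa2 + fb2 - t - f2 - fab2,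
      qb + u12 + f12 + fb2 - w12 - f2 - fb12] (by
        simp only [List.forall_mem_cons, List.not_mem_nil, false_imp_iff, implies_true, and_true]
        repeat' apply And.intro
        all_goals linarith)
  simp only [List.forall_mem_cons, List.not_mem_nil, false_imp_iff, implies_true, and_true] at u2l u2u
  obtain ⟨u2l1, u2l2, u2l3, u2l4, u2l5, u2l6, u2l7⟩ := u2l
  obtain ⟨u2u1, u2u2, u2u3, u2u4⟩ := u2u
  obtain ⟨w2, w2l, w2u⟩ := pick (w12)
      [u2 + t + f2 + fab2 - v2 - fa2 - fb2, qb + t + fb + fab2 - k - fab - fb2,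
      u2 + w12 + f2 + fb12 - u12 - f12 - fb2, qb + w12 + fb + fb12 - w1 - fb1 - fb2]
      [u2, qb, w12 + fab2 + fb12 - fb2 - fab12, u2 + qb + f2 + fb - p - fb2] (by
        simp only [List.forall_mem_cons, List.not_mem_nil, false_imp_iff, implies_true, and_true]
        repeat' apply And.intro
        all_goals linarith)
  simp only [List.forall_mem_cons, List.not_mem_nil, false_imp_iff, implies_true, and_true] at w2l w2u
  obtain ⟨w2l1, w2l2, w2l3, w2l4, w2l5⟩ := w2l
  obtain ⟨w2u1, w2u2, w2u3, w2u4⟩ := w2u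
  refine ⟨t, w12, w1, v2, v12, u12, v1, u1, u2, w2, ?_⟩
  repeat' apply And.intro
  all_goals linarith
/-- The five inequalities of the theorem, in terms of bits. -/
def Ineq5 (F : Bool → Bool → Bool → Bool → ℝ) (p qa qb : ℝ) : Prop :=
  p + F false false true true + F true true true false + F true true false true ≤
    2 * qa + 2 * qb + F true false true false + F true false false true + F false true true false + F false true false true ∧
  p + F false false true false + F false true false true + F true false true true + F true true true false ≤
    2 * qa + 2 * qb + F false true false false + F false false true true + F true false true false + F true false false true + F false true true false ∧
  p + F false false true false + F true false false true + F true true true false + F false true true true ≤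
    2 * qa + 2 * qb + F true false false false + F false false true true + F true false true false + F false true true false + F false true false true ∧
  p + F false false false true + F false true true false + F true false true true + F true true false true ≤
    2 * qa + 2 * qb + F false true false false + F false false true true + F true false true false + F true false false true + F false true false true ∧
  p + F false false false true + F true false true false + F true true false true + F false true true true ≤
    2 * qa + 2 * qb + F true false false false + F false false true true + F true false false true + F false true true false + F false true false true

theorem core_bits {F : Bool → Bool → Bool → Bool → ℝ} (h0 : F false false false false = 0)
    (hs : Sub4 F) (ht : Top4 F) {p qa qb k : ℝ} (c29 : 0 ≤ k) (c30 : qa ≤ p) (c31 : qb ≤ p)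
    (c32 : k ≤ qa) (c33 : k ≤ qb)
    (c34 : p + k + F true true false false ≤
      qa + qb + F true false false false + F false true false false)
    (c35 : qb + F false true false false ≤ k + F true true false false)
    (c36 : qa + F true false false false ≤ k + F true true false false)
    (hI : Ineq5 F p qa qb) :
    ∃ D : Bool → Bool → Bool → Bool → ℝ, Sub4 (fun a b c d => F a b c d + D a b c d) ∧
      Top4 (fun a b c d => F a b c d + D a b c d) ∧ Anti4 D ∧ 0 ≤ D true true true true ∧
      D false false false false = p ∧ D true false false false = qa ∧
      D false true false false = qb ∧ D true true false false = k := by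
  obtain ⟨h1, h2, h3, h4, h5, h6⟩ := hs
  obtain ⟨t1, t2, t3, t4⟩ := ht
  obtain ⟨i1, i2, i3, i4, i5⟩ := hI
  simp only [Bool.forall_bool, h0] at h1 h2 h3 h4 h5 h6
  obtain ⟨t, w12, w1, v2, v12, u12, v1, u1, u2, w2, H⟩ := core_real
    (F true false false false) (F false true false false) (F false false true false)
    (F false false false true) (F true true false false) (F true false true false)
    (F true false false true) (F false true true false) (F false true false true)
    (F false false true true) (F true true true false) (F true true false true)
    (F true false true true) (F false true true true) (F true true true true)
    p qa qb k
        (by linarith) (by linarith) (by linarith) (by linarith) (by linarith) (by linarith)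
    (by linarith) (by linarith) (by linarith) (by linarith) (by linarith) (by linarith)
    (by linarith) (by linarith) (by linarith) (by linarith) (by linarith) (by linarith)
    (by linarith) (by linarith) (by linarith) (by linarith) (by linarith) (by linarith)
    (by linarith) (by linarith) (by linarith) (by linarith)
    c29 c30 c31 c32 c33 c34 c35 c36 i1 i2 i3 i4 i5
  refine ⟨fun a b c d => match a, b, c, d with
    | false, false, false, false => p
    | false, false, false, true => u2
    | false, false, true, false => u1
    | false, false, true, true => u12
    | false, true, false, false => qb
    | false, true, false, true => w2
    | false, true, true, false => w1
    | false, true, true, true => w12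
    | true, false, false, false => qa
    | true, false, false, true => v2
    | true, false, true, false => v1
    | true, false, true, true => v12
    | true, true, false, false => k
    | true, true, false, true => t
    | true, true, true, false => t
    | true, true, true, true => t, ?_, ?_, ?_, ?_, rfl, rfl, rfl, rfl⟩
  all_goals
    simp only [Sub4, Top4, Anti4, Bool.forall_bool, h0]
    repeat' apply And.intro
    all_goals linarith

theorem fwd_bits {F D : Bool → Bool → Bool → Bool → ℝ}
    (h0 : F false false false false = 0) (hs : Sub4 F)
    (hsD : Sub4 (fun a b c d => F a b c d + D a b c d)) (hD : Anti4 D)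
    (hp : 0 ≤ D true true true true) :
    Ineq5 F (D false false false false) (D true false false false)
      (D false true false false) := by
  obtain ⟨h1, h2, h3, h4, h5, h6⟩ := hs
  obtain ⟨k1, k2, k3, k4, k5, k6⟩ := hsD
  obtain ⟨d1, d2, d3, d4⟩ := hD
  simp only [Bool.forall_bool, h0] at h1 h2 h3 h4 h5 h6 k1 k2 k3 k4 k5 k6 d1 d2 d3 d4
  refine ⟨?_, ?_, ?_, ?_, ?_⟩ <;> linarith

/-! ### From sets to bits and back -/

theorem poly_sub4 {a b c d y : α} (hnd : ([a, b, c, d, y] : List α).Nodup)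
    {M : Finset α} {g : Finset α → ℝ} (hg : IsPolymatroid M g) (e : Bool)
    (hM : ∀ p q r s, bits a b c d y p q r s e ⊆ M) :
    Sub4 (fun p q r s => g (bits a b c d y p q r s e)) := by
  have key := fun p q r s p' q' r' s' =>
    poly_bits hnd hg p q r s e p' q' r' s' e (hM _ _ _ _) (hM _ _ _ _)
  refine ⟨fun r s => ?_, fun q s => ?_, fun q r => ?_, fun p s => ?_, fun p r => ?_,
    fun p q => ?_⟩
  · simpa using key true false r s false true r s
  · simpa using key true q false s false q true s
  · simpa using key true q r false false q r true
  · simpa using key p true false s p false true s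
  · simpa using key p true r false p false r true
  · simpa using key p q true false p q false true

theorem bits_mono (a b c d y : α) {p q r s e p' q' r' s' e' : Bool}
    (hp : p ≤ p') (hq : q ≤ q') (hr : r ≤ r') (hs : s ≤ s') (he : e ≤ e') :
    bits a b c d y p q r s e ⊆ bits a b c d y p' q' r' s' e' := by
  intro z
  simp only [mem_bits]
  have aux : ∀ {u v : Bool}, u ≤ v → u = true → v = true := by decide
  rintro (⟨h, h'⟩ | ⟨h, h'⟩ | ⟨h, h'⟩ | ⟨h, h'⟩ | ⟨h, h'⟩)
  · exact Or.inl ⟨h, aux hp h'⟩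
  · exact Or.inr (Or.inl ⟨h, aux hq h'⟩)
  · exact Or.inr (Or.inr (Or.inl ⟨h, aux hr h'⟩))
  · exact Or.inr (Or.inr (Or.inr (Or.inl ⟨h, aux hs h'⟩)))
  · exact Or.inr (Or.inr (Or.inr (Or.inr ⟨h, aux he h'⟩)))

theorem pair_cases {a b a' b' : α} (h : ({a', b'} : Finset α) = {a, b}) :
    (a' = a ∧ b' = b) ∨ (a' = b ∧ b' = a) := by
  have h' := congrArg (fun s : Finset α => (s : Set α)) h
  simp only [Finset.coe_insert, Finset.coe_singleton] at h'
  exact Set.pair_eq_pair_iff.1 h'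

/-- The condition of the theorem, expressed in bits. -/
theorem cond_iff {a b x1 x2 y : α} {fX fy : Finset α → ℝ} (h0 : fX ∅ = 0)
    (hXy : ∀ A ⊆ ({a, b} : Finset α), fy A = fX A) :
    (∀ a' b' x1' x2' : α, ({a', b'} : Finset α) = {a, b} →
        ({x1', x2'} : Finset α) = {x1, x2} → ∀ s : Bool,
        0 ≤ (if s then ingleton fX {a'} {b'} {x1'} {x2'}
              else ingleton fX {a'} {x1'} {b'} {x2'}) +
            pmi fy {y} {a'} {b'} + pmi fy {y} {b'} {a'} + pmi fy {a'} {b'} {y} +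
            3 * pcd fy {y} {a', b'}) ↔
      Ineq5 (fun p q r s => fX (bits a b x1 x2 y p q r s false))
        (fy (bits a b x1 x2 y false false false false true))
        (fy (bits a b x1 x2 y true false false false true) -
          fX (bits a b x1 x2 y true false false false false))
        (fy (bits a b x1 x2 y false true false false true) -
          fX (bits a b x1 x2 y false true false false false)) := by
  have ha : ({a} : Finset α) = bits a b x1 x2 y true false false false false := by simp [bits]
  have hb : ({b} : Finset α) = bits a b x1 x2 y false true false false false := by simp [bits]
  have hx1 : ({x1} : Finset α) = bits a b x1 x2 y false false true false false := by simp [bits]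
  have hx2 : ({x2} : Finset α) = bits a b x1 x2 y false false false true false := by simp [bits]
  have hy : ({y} : Finset α) = bits a b x1 x2 y false false false false true := by simp [bits]
  have he : (∅ : Finset α) = bits a b x1 x2 y false false false false false := by simp [bits]
  have hab : ({a, b} : Finset α) = bits a b x1 x2 y true true false false false := by
    ext z; simp [mem_bits]
  have hba : ({b, a} : Finset α) = bits a b x1 x2 y true true false false false := by
    rw [Finset.pair_comm, hab]
  have ea := hXy {a} (by simp)
  have eb := hXy {b} (by simp)
  have eab := hXy {a, b} (by simp)
  rw [ha] at ea
  rw [hb] at eb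
  rw [hab] at eab
  rw [he] at h0
  constructor
  · intro h
    have i1 := h a b x1 x2 rfl rfl true
    have i2 := h a b x1 x2 rfl rfl false
    have i3 := h b a x1 x2 (Finset.pair_comm _ _) rfl false
    have i4 := h a b x2 x1 rfl (Finset.pair_comm _ _) false
    have i5 := h b a x2 x1 (Finset.pair_comm _ _) (Finset.pair_comm _ _) false
    simp only [if_true, Bool.false_eq_true, if_false, ingleton, pmi, pcd, hab, hba]
      at i1 i2 i3 i4 i5
    simp only [ha, hb, hx1, hx2, hy, he, bits_union, Bool.or_true, Bool.or_false,
      Bool.true_or, Bool.false_or, h0, ea, eb, eab] at i1 i2 i3 i4 i5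
    refine ⟨?_, ?_, ?_, ?_, ?_⟩ <;> linarith
  · rintro ⟨i1, i2, i3, i4, i5⟩ a' b' x1' x2' hA hX s
    obtain ⟨rfl, rfl⟩ | ⟨rfl, rfl⟩ := pair_cases hA <;>
    obtain ⟨rfl, rfl⟩ | ⟨rfl, rfl⟩ := pair_cases hX <;> cases s <;>
    simp only [if_true, Bool.false_eq_true, if_false, ingleton, pmi, pcd, hab, hba] <;>
    simp only [ha, hb, hx1, hx2, hy, he, bits_union, Bool.or_true, Bool.or_false,
      Bool.true_or, Bool.false_or, h0, ea, eb, eab] <;> linarith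

/-- A one-point extension described by bits is a polymatroid. -/
theorem extend_poly {a b x1 x2 y : α}
    {F D : Bool → Bool → Bool → Bool → ℝ} (h0 : F false false false false = 0)
    (hs : Sub4 F) (ht : Top4 F) (hsD : Sub4 (fun a b c d => F a b c d + D a b c d))
    (htD : Top4 (fun a b c d => F a b c d + D a b c d)) (hD : Anti4 D)
    (hp : 0 ≤ D true true true true) :
    IsPolymatroid ({a, b} ∪ {x1, x2} ∪ {y} : Finset α) (fun A =>
      F (decide (a ∈ A)) (decide (b ∈ A)) (decide (x1 ∈ A)) (decide (x2 ∈ A)) +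
      if y ∈ A then D (decide (a ∈ A)) (decide (b ∈ A)) (decide (x1 ∈ A)) (decide (x2 ∈ A))
        else 0) := by
  have hm := mono4 hs ht
  have hmD := mono4 hsD htD
  have hpos : ∀ p q r s, 0 ≤ D p q r s := fun p q r s =>
    hp.trans (hD.le (Bool.le_true _) (Bool.le_true _) (Bool.le_true _) (Bool.le_true _))
  have hFpos : ∀ p q r s, 0 ≤ F p q r s := fun p q r s => by
    have := hm.le (Bool.false_le p) (Bool.false_le q) (Bool.false_le r) (Bool.false_le s)
    simp only [h0] at this
    linarith
  have hle : ∀ {A B : Finset α} (z : α), A ⊆ B → decide (z ∈ A) ≤ decide (z ∈ B) := by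
    intro A B z h
    by_cases hz : z ∈ A
    · simp [hz, h hz]
    · simp [hz]
  refine ⟨by simp [h0], ?_, ?_, ?_⟩
  · intro A _
    dsimp only
    split_ifs
    · exact add_nonneg (hFpos _ _ _ _) (hpos _ _ _ _)
    · simpa using hFpos _ _ _ _
  · intro A B hAB _
    dsimp only
    have m1 := hm.le (hle a hAB) (hle b hAB) (hle x1 hAB) (hle x2 hAB)
    have m2 := hmD.le (hle a hAB) (hle b hAB) (hle x1 hAB) (hle x2 hAB)
    have m3 := hpos (decide (a ∈ B)) (decide (b ∈ B)) (decide (x1 ∈ B)) (decide (x2 ∈ B))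
    split_ifs with hA hB hB
    · linarith
    · exact absurd (hAB hA) hB
    · linarith
    · linarith
  · intro A B _ _
    simp only [Finset.mem_union, Finset.mem_inter, Bool.decide_or, Bool.decide_and]
    generalize decide (a ∈ A) = p
    generalize decide (b ∈ A) = q
    generalize decide (x1 ∈ A) = r
    generalize decide (x2 ∈ A) = s
    generalize decide (a ∈ B) = p'
    generalize decide (b ∈ B) = q'
    generalize decide (x1 ∈ B) = r'
    generalize decide (x2 ∈ B) = s'
    have s1 := sub4_full hs p q r s p' q' r' s'
    have s2 := sub4_full hsD p q r s p' q' r' s'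
    have d1 : D (p || p') (q || q') (r || r') (s || s') ≤ D p q r s :=
      hD.le (Bool.left_le_or _ _) (Bool.left_le_or _ _) (Bool.left_le_or _ _)
        (Bool.left_le_or _ _)
    have d2 : D (p || p') (q || q') (r || r') (s || s') ≤ D p' q' r' s' :=
      hD.le (Bool.right_le_or _ _) (Bool.right_le_or _ _) (Bool.right_le_or _ _)
        (Bool.right_le_or _ _)
    by_cases hA : y ∈ A <;> by_cases hB : y ∈ B <;>
      simp only [hA, hB, or_true, or_false, and_true, and_false, if_true, if_false] <;>
      linarith

/-- `f_X` on `{a,b,x1,x2}` and `f_y` on `{a,b,y}` have an amalgam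
iff `{f_X[a,b,x1,x2] or f_X[a,x1,b,x2]} + f_y(y,a|b)+f_y(y,b|a)+f_y(a,b|y)+3f_y(y|ab) ≥ 0`
for each braced choice and all exchanges of `a` with `b` and of `x1` with `x2`. -/
theorem statement_16 (a b x1 x2 y : α) (hnd : ([a, b, x1, x2, y] : List α).Nodup)
    (f fX fy : Finset α → ℝ)
    (hf : IsPolymatroid {a, b} f)
    (hfX : IsPolymatroid {a, b, x1, x2} fX) (hfy : IsPolymatroid {a, b, y} fy)
    (hrX : ∀ A ⊆ ({a, b} : Finset α), fX A = f A)
    (hry : ∀ A ⊆ ({a, b} : Finset α), fy A = f A) :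
    HaveAmalgam {a, b} {x1, x2} {y} fX fy ↔
      ∀ a' b' x1' x2' : α, ({a', b'} : Finset α) = {a, b} →
        ({x1', x2'} : Finset α) = {x1, x2} → ∀ s : Bool,
        0 ≤ (if s then ingleton fX {a'} {b'} {x1'} {x2'}
              else ingleton fX {a'} {x1'} {b'} {x2'}) +
            pmi fy {y} {a'} {b'} + pmi fy {y} {b'} {a'} + pmi fy {a'} {b'} {y} +
            3 * pcd fy {y} {a', b'} := by
  have hX : IsPolymatroid ({a, b} ∪ {x1, x2} : Finset α) fX := by
    have e : ({a, b} ∪ {x1, x2} : Finset α) = {a, b, x1, x2} := by ext; simp; tauto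
    rwa [e]
  have hY : IsPolymatroid ({a, b} ∪ {y} : Finset α) fy := by
    have e : ({a, b} ∪ {y} : Finset α) = {a, b, y} := by ext; simp [or_assoc]
    rwa [e]
  have hXy : ∀ A ⊆ ({a, b} : Finset α), fy A = fX A := fun A hA => by rw [hrX A hA, hry A hA]
  rw [cond_iff hfX.1 hXy]
  have he : bits a b x1 x2 y false false false false false = ∅ := by simp [bits]
  have hsub : ∀ p q, bits a b x1 x2 y p q false false false ⊆ ({a, b} : Finset α) := by
    intro p q z
    simp only [mem_bits, Finset.mem_insert, Finset.mem_singleton]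
    simp
    tauto
  have hF0 : fX (bits a b x1 x2 y false false false false false) = 0 := by rw [he, hfX.1]
  have hFs := poly_sub4 hnd hX false (bits_sub_X a b x1 x2 y)
  constructor
  · rintro ⟨g, hg, hgX, hgY⟩
    have gX : ∀ p q r s, fX (bits a b x1 x2 y p q r s false) =
        g (bits a b x1 x2 y p q r s false) := fun p q r s => (hgX _ (bits_sub_X _ _ _ _ _ _ _ _ _)).symm
    have gY : ∀ p q, fy (bits a b x1 x2 y p q false false true) =
        g (bits a b x1 x2 y p q false false true) := fun p q =>
      (hgY _ (bits_sub_Y _ _ _ _ _ _ _ _)).symm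
    have hgs := poly_sub4 hnd hg true (fun p q r s => bits_sub_all a b x1 x2 y p q r s true)
    have key := fun p q r s p' q' r' s' =>
      poly_bits hnd hg p q r s true p' q' r' s' false (bits_sub_all _ _ _ _ _ _ _ _ _ _)
        (bits_sub_all _ _ _ _ _ _ _ _ _ _)
    have main := fwd_bits (F := fun p q r s => fX (bits a b x1 x2 y p q r s false))
      (D := fun p q r s => g (bits a b x1 x2 y p q r s true) -
        fX (bits a b x1 x2 y p q r s false)) hF0 hFs (by simpa using hgs) (by
        simp only [gX]
        refine ⟨fun q r s => ?_, fun p r s => ?_, fun p q s => ?_, fun p q r => ?_⟩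
        · have := key false q r s true q r s
          simp at this
          linarith
        · have := key p false r s p true r s
          simp at this
          linarith
        · have := key p q false s p q true s
          simp at this
          linarith
        · have := key p q r false p q r true
          simp at this
          linarith) (by
        simp only [gX, sub_nonneg]
        exact hg.2.2.1 _ _ (bits_mono _ _ _ _ _ le_rfl le_rfl le_rfl le_rfl (Bool.false_le _))
          (bits_sub_all _ _ _ _ _ _ _ _ _ _))
    simpa only [gY, hF0, sub_zero] using main
  · intro hI
    have hFt : Top4 (fun p q r s => fX (bits a b x1 x2 y p q r s false)) := by
      refine ⟨?_, ?_, ?_, ?_⟩ <;>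
        exact hX.2.2.1 _ _ (bits_mono _ _ _ _ _ (by decide) (by decide) (by decide) (by decide)
          le_rfl) (bits_sub_X _ _ _ _ _ _ _ _ _)
    have ey : ∀ p q, fy (bits a b x1 x2 y p q false false false) =
        fX (bits a b x1 x2 y p q false false false) := fun p q => hXy _ (hsub p q)
    have key := fun p q e p' q' e' =>
      poly_bits hnd hY p q false false e p' q' false false e' (bits_sub_Y _ _ _ _ _ _ _ _)
        (bits_sub_Y _ _ _ _ _ _ _ _)
    have mon := fun p q e p' q' e' (hp : p ≤ p') (hq : q ≤ q') (he : e ≤ e') =>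
      hY.2.2.1 _ _ (bits_mono a b x1 x2 y hp hq (le_refl false) (le_refl false) he)
        (bits_sub_Y _ _ _ _ _ _ _ _)
    have k1 := mon true true false true true true (by decide) (by decide) (by decide)
    have k2 := key true false false false false true
    have k3 := key false true false false false true
    have k4 := key true true false true false true
    have k5 := key true true false false true true
    have k6 := key true false true false true true
    have k7 := mon false true true true true true (by decide) (by decide) (by decide)
    have k8 := mon true false true true true true (by decide) (by decide) (by decide)
    simp only [Bool.or_true, Bool.or_false, Bool.and_true, Bool.and_false, Bool.or_self,
      Bool.and_self, Bool.true_or, Bool.false_and, ey, hF0] at k1 k2 k3 k4 k5 k6 k7 k8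
    obtain ⟨D, hsD, htD, hD, hp, d0, d1, d2, d3⟩ := core_bits
      (k := fy (bits a b x1 x2 y true true false false true) -
        fX (bits a b x1 x2 y true true false false false))
      hF0 hFs hFt (by linarith) (by linarith) (by linarith) (by linarith) (by linarith)
      (by linarith) (by linarith) (by linarith) hI
    refine ⟨_, extend_poly hF0 hFs hFt hsD htD hD hp, ?_, ?_⟩
    · intro A hA
      have hyA : y ∉ A := by
        intro h
        have := hA h
        simp only [Finset.mem_union, Finset.mem_insert, Finset.mem_singleton] at this
        simp only [List.nodup_cons, List.mem_cons, List.not_mem_nil, not_or, or_false] at hnd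
        grind
      have e := bits_eq (y := y) (hA.trans Finset.subset_union_left)
      simp only [hyA, decide_false] at e
      simp only [hyA, if_false, add_zero, e]
    · intro A hA
      have hc : x1 ∉ A ∧ x2 ∉ A := by
        simp only [List.nodup_cons, List.mem_cons, List.not_mem_nil, not_or, or_false] at hnd
        constructor <;> intro h <;> have := hA h <;>
          simp only [Finset.mem_union, Finset.mem_insert, Finset.mem_singleton] at this <;> grind
      have e := bits_eq (a := a) (b := b) (c := x1) (d := x2) (y := y) (A := A)
        (hA.trans (Finset.union_subset_union_left Finset.subset_union_left))
      simp only [hc.1, hc.2, decide_false] at e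
      simp only [hc.1, hc.2, decide_false]
      have e' : fy A = fy (bits a b x1 x2 y (decide (a ∈ A)) (decide (b ∈ A)) false false
        (decide (y ∈ A))) := by rw [e]
      rw [e']
      by_cases hyA : y ∈ A
      · simp only [hyA, if_true, decide_true]
        cases decide (a ∈ A) <;> cases decide (b ∈ A) <;> simp only [d0, d1, d2, d3, hF0] <;> ring
      · simp only [hyA, if_false, decide_false, ey, add_zero]
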